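/- arXiv:math-ph/0308037 — 2 statements merged into one kernel-verified Lean document; each statement's English description precedes it below -/
import Mathlib

section
/- Let ρ = exp(−H₀) and ρ_X = exp(−(H₀+X)) be finite faithful weights on a separable Hilbert space H, and suppose ρ_X is nearby ρ with constant C > 1, i.e. C⁻¹ρ ≤ ρ_X ≤ Cρ in the Loewner order. Then X extends to a bounded self-adjoint operator on H with −(log C)·I ≤ X ≤ (log C)·I, so in particular ‖X‖ ≤ log C. -/
open scoped InnerProductSpace ENNReal NNReal
open MeasureTheory Metric Filter

noncomputable section

variable {H : Type*} [NormedAddCommGroup H] [InnerProductSpace ℂ H] [CompleteSpace H]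
  [TopologicalSpace.SeparableSpace H]

/-- The real power `ρ ^ t` (for `t ≥ 0`) of a positive operator `ρ`, via the continuous
functional calculus. -/
def opow (ρ : H →L[ℂ] H) (t : ℝ) : H →L[ℂ] H := cfc (fun x : ℝ => x ^ t) ρ

/-- The (real) trace of an operator, computed along the Hilbert basis `b`. -/
def trElem {ι : Type*} (b : HilbertBasis ι ℂ H) (T : H →L[ℂ] H) : ℝ :=
  ∑' i, (⟪b i, T (b i)⟫_ℂ).re

/-- `ρ` is a finite faithful weight: a positive, injective, trace-class operator
(trace-class being witnessed by summability of the diagonal in the Hilbert basis `b`). -/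
def IsFiniteWeight {ι : Type*} (b : HilbertBasis ι ℂ H) (ρ : H →L[ℂ] H) : Prop :=
  0 ≤ ρ ∧ Function.Injective (⇑ρ) ∧ Summable (fun i => (⟪b i, ρ (b i)⟫_ℂ).re)

/-- `σ` is nearby `ρ`: there is `C > 1` with `C⁻¹ ρ ≤ σ ≤ C ρ` in the Loewner order. -/
def IsNearby (σ ρ : H →L[ℂ] H) : Prop :=
  ∃ C : ℝ, 1 < C ∧ C⁻¹ • ρ ≤ σ ∧ σ ≤ C • ρ

/-- `F` is the Araki family `t ↦ ρ^t X ρ^{-t}` of `X` relative to `ρ`: a bounded holomorphic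
`B(H)`-valued extension to the disc `|t| < 1/2` of `t ↦ ρ^t X ρ^{-t}`, the latter being
expressed by `F t * ρ^t = ρ^t * X` and `ρ^t * F (-t) = X * ρ^t` for real `0 ≤ t < 1/2`. -/
def IsArakiFamily (ρ X : H →L[ℂ] H) (F : ℂ → H →L[ℂ] H) : Prop :=
  DifferentiableOn ℂ F (ball (0:ℂ) (1/2)) ∧
  (∃ M : ℝ, ∀ t ∈ ball (0:ℂ) (1/2), ‖F t‖ ≤ M) ∧
  (∀ t : ℝ, 0 ≤ t → t < 1/2 → F (t:ℂ) * opow ρ t = opow ρ t * X) ∧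
  (∀ t : ℝ, 0 ≤ t → t < 1/2 → opow ρ t * F (-(t:ℂ)) = X * opow ρ t)

/-- `X` satisfies the Araki condition for `ρ`. -/
def SatisfiesAraki (ρ X : H →L[ℂ] H) : Prop := ∃ F, IsArakiFamily ρ X F

/-- The Araki norm `‖X‖_A = sup_{|t| < 1/2} ‖ρ^t X ρ^{-t}‖`. -/
def arakiNorm (ρ X : H →L[ℂ] H) : ℝ :=
  sInf {M : ℝ | 0 ≤ M ∧ ∃ F, IsArakiFamily ρ X F ∧ ∀ t ∈ ball (0:ℂ) (1/2), ‖F t‖ ≤ M}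

/-- `σ = exp (-(H₀ + X))` where `ρ = exp (-H₀)`: the semigroup `t ↦ σ^t` is the mild
(Duhamel) solution of the semigroup `t ↦ ρ^t` perturbed by the bounded operator `-X`,
i.e. `σ^t = ρ^t - ∫_0^t ρ^{t-s} X σ^s ds` for all `t ≥ 0`. -/
def IsExpPerturbed (ρ σ X : H →L[ℂ] H) : Prop :=
  ∀ t : ℝ, 0 ≤ t →
    opow σ t = opow ρ t - ∫ s in (0:ℝ)..t, opow ρ (t - s) * X * opow σ s

/-- The truncation `x ↦ -log (x + e^{-n})` of `-log`; it increases pointwise to `-log x`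
as `n → ∞` and is operator anti-monotone. -/
def negLogTrunc (n : ℕ) (x : ℝ) : ℝ := - Real.log (x + Real.exp (-(n:ℝ)))

/-- The regularised quadratic form `⟪ξ, (-log (ρ + e^{-n})) ξ⟫` of `H₀ = -log ρ`. -/
def negLogFormSeq (ρ : H →L[ℂ] H) (ξ : H) (n : ℕ) : ℝ :=
  (⟪ξ, (cfc (negLogTrunc n) ρ) ξ⟫_ℂ).re

/-- `ξ` lies in the form domain `Q(H₀) = Dom (H₀^{1/2})` of `H₀ = -log ρ`. -/
def InFormDomain (ρ : H →L[ℂ] H) (ξ : H) : Prop :=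
  BddAbove (Set.range (negLogFormSeq ρ ξ))

/-- The value `⟪ξ, H₀ ξ⟫` of the quadratic form of `H₀ = -log ρ` (a monotone limit). -/
def negLogForm (ρ : H →L[ℂ] H) (ξ : H) : ℝ := ⨆ n, negLogFormSeq ρ ξ n

/-- The regularised quadratic form `⟪ξ, (σ + e^{-n})⁻¹ ξ⟫` of `σ⁻¹`. -/
def invFormSeq (σ : H →L[ℂ] H) (ξ : H) (n : ℕ) : ℝ :=
  (⟪ξ, (cfc (fun x : ℝ => (x + Real.exp (-(n:ℝ)))⁻¹) σ) ξ⟫_ℂ).re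

/-- The quadratic form `⟪ξ, σ⁻¹ ξ⟫ ∈ [0, ∞]` of the (possibly unbounded) inverse `σ⁻¹`
of the injective positive operator `σ`, as a monotone limit of regularisations. -/
def invForm (σ : H →L[ℂ] H) (ξ : H) : ℝ≥0∞ :=
  ⨆ n : ℕ, ENNReal.ofReal (invFormSeq σ ξ n)

/-- `S` is the relative entropy `S(ρ|σ) = Tr (ρ (log ρ - log σ))`, obtained as the limit of
the regularised quantities `Tr (ρ (log (ρ + e^{-n}) - log (σ + e^{-n})))`. -/
def IsRelativeEntropy {ι : Type*} (b : HilbertBasis ι ℂ H) (ρ σ : H →L[ℂ] H) (S : ℝ) : Prop :=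
  Tendsto (fun n : ℕ => trElem b (ρ * (cfc (negLogTrunc n) σ - cfc (negLogTrunc n) ρ)))
    atTop (nhds S)

/-- The `n`-th term of the Matsubara (Dyson/expansional) series: the integral over the
ordered simplex `0 ≤ s₁ ≤ ⋯ ≤ sₙ ≤ 1` (of volume `1/n!`) of the product
`F(s₁ - 1/2) ⋯ F(sₙ - 1/2)`, where `F t = ρ^t X ρ^{-t}`. -/
def matsubaraTerm (F : ℂ → H →L[ℂ] H) (n : ℕ) : H →L[ℂ] H :=
  ∫ s in {s : Fin n → ℝ | (∀ i, s i ∈ Set.Icc (0:ℝ) 1) ∧ Monotone s},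
    (List.ofFn fun i => F (((s i - 1/2 : ℝ) : ℂ))).prod

/-!
Write `Tₙ = log (ρ + e⁻ⁿ) - log (σ + e⁻ⁿ)`. Since `C ≥ 1`, the inequalities `C⁻¹ρ ≤ σ ≤ Cρ` survive
the shift by `e⁻ⁿ`, so operator monotonicity of the logarithm gives `-log C ≤ Tₙ ≤ log C` for
every `n`. Order intervals of operators are compact in the weak operator topology, hence `(Tₙ)`
has a cluster point `X` in the same interval. For `ξ` in the form domain, `⟪ξ, Tₙ ξ⟫` converges to
the difference of the quadratic forms of `-log σ` and `-log ρ`, that is to `q ξ`, which is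
therefore `⟪ξ, X ξ⟫`.
-/

section NormedSpace

open scoped Topology

variable {𝕜 E F : Type*} [RCLike 𝕜] [NormedAddCommGroup F] [InnerProductSpace 𝕜 F]
  [CompleteSpace F]

lemma exists_norm_le_tendsto_inner {α : Type*} {U : Ultrafilter α} {y : α → F} {c : ℝ}
    (hy : ∀ᶠ a in U, ‖y a‖ ≤ c) :
    ∃ x : F, ‖x‖ ≤ c ∧ ∀ w, Tendsto (fun a ↦ ⟪w, y a⟫_𝕜) U (𝓝 ⟪w, x⟫_𝕜) := by
  let f (a : α) : WeakDual 𝕜 F := (InnerProductSpace.toDual 𝕜 F (y a)).toWeakDual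
  obtain ⟨φ, hφ, hlim⟩ := (WeakDual.isCompact_closedBall (𝕜 := 𝕜) (E := F) 0 c).ultrafilter_le_nhds
    (U.map f) <| le_principal_iff.2 <| hy.mono fun a ha ↦ by simpa [f] using ha
  have hx (w : F) : ⟪(InnerProductSpace.toDual 𝕜 F).symm φ.toStrongDual, w⟫_𝕜 = φ w :=
    InnerProductSpace.toDual_symm_apply
  refine ⟨(InnerProductSpace.toDual 𝕜 F).symm φ.toStrongDual, by simpa using hφ, fun w ↦ ?_⟩
  have hw : Tendsto (fun a ↦ ⟪y a, w⟫_𝕜) U (𝓝 (φ w)) :=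
    ((WeakDual.eval_continuous w).tendsto φ).comp hlim
  simpa only [Function.comp_def, RCLike.star_def, ← hx, inner_conj_symm] using hw.star

theorem isCompact_setOf_norm_toCLM_le [SeminormedAddCommGroup E] [NormedSpace 𝕜 E] (c : ℝ) :
    IsCompact {A : E →WOT[𝕜] F | ‖A.toCLM‖ ≤ c} := by
  refine isCompact_iff_ultrafilter_le_nhds.2 fun U hU ↦ ?_
  have hbound : ∀ᶠ A : E →WOT[𝕜] F in U, ‖A.toCLM‖ ≤ c := le_principal_iff.1 hU
  have hlim (v : E) : ∃ x : F, ‖x‖ ≤ c * ‖v‖ ∧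
      ∀ w, Tendsto (fun A : E →WOT[𝕜] F ↦ ⟪w, A v⟫_𝕜) U (𝓝 ⟪w, x⟫_𝕜) :=
    exists_norm_le_tendsto_inner <| hbound.mono fun A hA ↦ A.toCLM.le_of_opNorm_le hA v
  choose L hLnorm hLlim using hlim
  let L' : E →ₗ[𝕜] F :=
    { toFun := L
      map_add' v v' := ext_inner_left 𝕜 fun w ↦ tendsto_nhds_unique (hLlim _ w) <| by
        simpa only [map_add, inner_add_right] using (hLlim v w).add (hLlim v' w)
      map_smul' a v := ext_inner_left 𝕜 fun w ↦ tendsto_nhds_unique (hLlim _ w) <| by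
        simpa only [map_smul, inner_smul_right, RingHom.id_apply] using (hLlim v w).const_mul a }
  obtain ⟨A, hA⟩ := hbound.exists
  refine ⟨.ofCLM (L'.mkContinuous c hLnorm),
    L'.mkContinuous_norm_le ((norm_nonneg _).trans hA) hLnorm, ?_⟩
  exact ContinuousLinearMapWOT.le_nhds_iff_forall_inner_apply_le_nhds.2 hLlim

end NormedSpace

section HilbertSpace

open scoped Topology

variable {𝕜 E : Type*} [RCLike 𝕜] [NormedAddCommGroup E] [InnerProductSpace 𝕜 E]

lemma re_inner_le_re_inner_of_le {S T : E →L[𝕜] E} (h : S ≤ T) (ξ : E) :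
    RCLike.re ⟪ξ, S ξ⟫_𝕜 ≤ RCLike.re ⟪ξ, T ξ⟫_𝕜 := by
  simpa only [sub_apply, inner_sub_right, map_sub, sub_nonneg]
    using ((ContinuousLinearMap.le_def S T).1 h).re_inner_nonneg_right ξ

lemma continuous_re_inner_apply_self (ξ : E) :
    Continuous fun A : E →WOT[𝕜] E ↦ RCLike.re ⟪ξ, A ξ⟫_𝕜 :=
  RCLike.continuous_re.comp <| ContinuousLinearMapWOT.continuous_dual_apply ξ (innerSL 𝕜 ξ)

lemma re_inner_eq_of_mapClusterPt {α : Type*} {l : Filter α} {T : α → E →WOT[𝕜] E}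
    {X : E →WOT[𝕜] E} {ξ : E} {r : ℝ} (hX : MapClusterPt X l T)
    (hr : Tendsto (fun a ↦ RCLike.re ⟪ξ, T a ξ⟫_𝕜) l (𝓝 r)) : RCLike.re ⟪ξ, X ξ⟫_𝕜 = r :=
  eq_of_nhds_neBot <|
    (hX.continuousAt_comp (continuous_re_inner_apply_self ξ).continuousAt).clusterPt.mono hr

variable [CompleteSpace E]

lemma isClosed_setOf_nonneg_toCLM : IsClosed {A : E →WOT[𝕜] E | 0 ≤ A.toCLM} := by
  have hnonneg (A : E →WOT[𝕜] E) :
      0 ≤ A.toCLM ↔ star A = A ∧ ∀ v, 0 ≤ RCLike.re ⟪v, A v⟫_𝕜 := by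
    rw [ContinuousLinearMap.nonneg_iff_isPositive, ContinuousLinearMap.isPositive_def']
    refine and_congr ContinuousLinearMapWOT.toCLM_injective.eq_iff (forall_congr' fun v ↦ ?_)
    rw [ContinuousLinearMap.reApplyInnerSelf_apply, inner_re_symm, ContinuousLinearMapWOT.coe_toCLM]
  simp only [hnonneg, Set.ofPred_and, Set.ofPred_forall]
  exact (isClosed_eq continuous_star continuous_id).inter <| isClosed_iInter fun v ↦
    isClosed_le continuous_const (continuous_re_inner_apply_self v)

lemma isClosed_preimage_toCLM_Icc (S T : E →L[𝕜] E) :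
    IsClosed (ContinuousLinearMapWOT.toCLM ⁻¹' Set.Icc S T) := by
  have hIcc : ContinuousLinearMapWOT.toCLM ⁻¹' Set.Icc S T =
      {A : E →WOT[𝕜] E | 0 ≤ (A - .ofCLM S).toCLM} ∩
        {A | 0 ≤ (.ofCLM T - A : E →WOT[𝕜] E).toCLM} := by
    ext A
    simp only [Set.mem_preimage, Set.mem_Icc, Set.mem_inter_iff, Set.mem_ofPred_eq,
      ContinuousLinearMap.le_def, sub_zero, ContinuousLinearMapWOT.toCLM_sub]
  rw [hIcc]
  exact (isClosed_setOf_nonneg_toCLM.preimage (continuous_id.sub continuous_const)).inter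
    (isClosed_setOf_nonneg_toCLM.preimage (continuous_const.sub continuous_id))

end HilbertSpace

section ComplexHilbertSpace

variable {E : Type*} [NormedAddCommGroup E] [InnerProductSpace ℂ E] [CompleteSpace E]

theorem isCompact_preimage_toCLM_Icc (S T : E →L[ℂ] E) :
    IsCompact (ContinuousLinearMapWOT.toCLM ⁻¹' Set.Icc S T) := by
  refine (isCompact_setOf_norm_toCLM_le (‖T - S‖ + ‖S‖)).of_isClosed_subset
    (isClosed_preimage_toCLM_Icc S T) fun A ⟨hSA, hAT⟩ ↦ ?_
  calc ‖A.toCLM‖ = ‖(A.toCLM - S) + S‖ := by rw [sub_add_cancel]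
    _ ≤ ‖A.toCLM - S‖ + ‖S‖ := norm_add_le _ _
    _ ≤ ‖T - S‖ + ‖S‖ := by
      gcongr
      exact CStarAlgebra.norm_le_norm_of_nonneg_of_le (sub_nonneg.2 hSA) (sub_le_sub_right hAT S)

end ComplexHilbertSpace

section CStarAlgebra

variable {A : Type*} [CStarAlgebra A] [PartialOrder A] [StarOrderedRing A] {a b : A} {C : ℝ}

lemma norm_le_of_mem_Icc_algebraMap {r : ℝ} (hr : 0 ≤ r)
    (ha : a ∈ Set.Icc (-algebraMap ℝ A r) (algebraMap ℝ A r)) : ‖a‖ ≤ r := by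
  obtain ⟨hlow, hupp⟩ := ha
  have hsa : IsSelfAdjoint a := ((IsSelfAdjoint.all r).algebraMap A).neg.of_ge hlow
  rw [← map_neg] at hlow
  rw [← cfc_id ℝ a]
  exact norm_cfc_le hr fun x hx ↦ abs_le.2
    ⟨(algebraMap_le_iff_le_spectrum (a := a)).1 hlow x hx,
      (le_algebraMap_iff_spectrum_le (a := a)).1 hupp x hx⟩

lemma isStrictlyPositive_add_algebraMap (ha : 0 ≤ a) {e : ℝ} (he : 0 < e) :
    IsStrictlyPositive (a + algebraMap ℝ A e) := by
  rw [Algebra.algebraMap_eq_smul_one]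
  exact (isStrictlyPositive_one.smul he).nonneg_add ha

lemma cfc_negLogTrunc (ha : 0 ≤ a) (n : ℕ) :
    cfc (negLogTrunc n) a = -CFC.log (a + algebraMap ℝ A (Real.exp (-n))) := by
  have hpos : ∀ x ∈ spectrum ℝ a, x + Real.exp (-n) ≠ 0 := fun x hx ↦
    (add_pos_of_nonneg_of_pos (spectrum_nonneg_of_nonneg ha hx) (Real.exp_pos _)).ne'
  have hshift : a + algebraMap ℝ A (Real.exp (-n)) = cfc (fun x : ℝ ↦ x + Real.exp (-n)) a := by
    rw [cfc_add_const .., cfc_id' ℝ a]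
  have hlog : ContinuousOn Real.log ((fun x ↦ x + Real.exp (-n)) '' spectrum ℝ a) :=
    Real.continuousOn_log.mono <| by rintro _ ⟨x, hx, rfl⟩; exact hpos x hx
  rw [hshift, CFC.log, ← cfc_comp' Real.log _ a, ← cfc_neg]
  rfl

lemma monotone_cfc_negLogTrunc (ha : 0 ≤ a) : Monotone fun n ↦ cfc (negLogTrunc n) a := by
  intro m n hmn
  simp only [cfc_negLogTrunc ha]
  refine neg_le_neg (CFC.log_le_log ?_ (isStrictlyPositive_add_algebraMap ha (Real.exp_pos _)))
  gcongr

lemma cfc_negLogTrunc_le_add_of_le_smul (ha : 0 ≤ a) (hb : 0 ≤ b) (hC : 1 ≤ C) (h : b ≤ C • a)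
    (n : ℕ) : cfc (negLogTrunc n) a ≤ cfc (negLogTrunc n) b + algebraMap ℝ A (Real.log C) := by
  set e := Real.exp (-n)
  have he : 0 < e := Real.exp_pos _
  have hshift : b + algebraMap ℝ A e ≤ C • (a + algebraMap ℝ A e) := by
    calc b + algebraMap ℝ A e ≤ C • a + algebraMap ℝ A (C * e) := by
          gcongr
          exact le_mul_of_one_le_left he.le hC
      _ = C • (a + algebraMap ℝ A e) := by
          simp only [Algebra.algebraMap_eq_smul_one, smul_add, mul_smul]
  have hlog := CFC.log_le_log hshift (isStrictlyPositive_add_algebraMap hb he)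
  rw [CFC.log_smul' _ (by positivity) (isStrictlyPositive_add_algebraMap ha he)] at hlog
  rw [cfc_negLogTrunc ha, cfc_negLogTrunc hb, neg_add_eq_sub, neg_le_sub_iff_le_add]
  exact hlog

lemma cfc_negLogTrunc_sub_mem_Icc (ha : 0 ≤ a) (hb : 0 ≤ b) (hC : 1 ≤ C) (hab : a ≤ C • b)
    (hba : b ≤ C • a) (n : ℕ) :
    cfc (negLogTrunc n) b - cfc (negLogTrunc n) a ∈
      Set.Icc (-algebraMap ℝ A (Real.log C)) (algebraMap ℝ A (Real.log C)) :=
  ⟨neg_le_sub_iff_le_add.2 (cfc_negLogTrunc_le_add_of_le_smul ha hb hC hba n),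
    sub_le_iff_le_add'.2 (cfc_negLogTrunc_le_add_of_le_smul hb ha hC hab n)⟩

end CStarAlgebra

section QuadraticForm

open scoped Topology

variable {E : Type*} [NormedAddCommGroup E] [InnerProductSpace ℂ E] [CompleteSpace E]
  {ρ σ : E →L[ℂ] E} {ξ : E} {C : ℝ}

lemma monotone_negLogFormSeq (hρ : 0 ≤ ρ) (ξ : E) : Monotone (negLogFormSeq ρ ξ) :=
  fun _ _ hmn ↦ re_inner_le_re_inner_of_le (monotone_cfc_negLogTrunc hρ hmn) ξ

lemma InFormDomain.tendsto_negLogFormSeq (hρ : 0 ≤ ρ) (hξ : InFormDomain ρ ξ) :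
    Tendsto (negLogFormSeq ρ ξ) atTop (𝓝 (negLogForm ρ ξ)) :=
  tendsto_atTop_ciSup (monotone_negLogFormSeq hρ ξ) hξ

lemma negLogFormSeq_le_add_of_le_smul (hρ : 0 ≤ ρ) (hσ : 0 ≤ σ) (hC : 1 ≤ C) (h : σ ≤ C • ρ)
    (ξ : E) (n : ℕ) :
    negLogFormSeq ρ ξ n ≤ negLogFormSeq σ ξ n + Real.log C * ‖ξ‖ ^ 2 := by
  have hle := re_inner_le_re_inner_of_le (cfc_negLogTrunc_le_add_of_le_smul hρ hσ hC h n) ξ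
  rw [Algebra.algebraMap_eq_smul_one, add_apply, inner_add_right, map_add,
    smul_apply, one_apply_eq_self, inner_smul_right_eq_smul,
    RCLike.smul_re, inner_self_eq_norm_sq] at hle
  exact hle

lemma InFormDomain.of_le_smul (hρ : 0 ≤ ρ) (hσ : 0 ≤ σ) (hC : 1 ≤ C) (h : σ ≤ C • ρ)
    (hξ : InFormDomain σ ξ) : InFormDomain ρ ξ := by
  obtain ⟨M, hM⟩ := hξ
  refine ⟨M + Real.log C * ‖ξ‖ ^ 2, Set.forall_mem_range.2 fun n ↦ ?_⟩
  exact (negLogFormSeq_le_add_of_le_smul hρ hσ hC h ξ n).trans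
    (add_le_add_left (hM (Set.mem_range_self n)) _)

lemma InFormDomain.tendsto_re_inner_cfc_negLogTrunc_sub (hρ : 0 ≤ ρ) (hσ : 0 ≤ σ)
    (hξρ : InFormDomain ρ ξ) (hξσ : InFormDomain σ ξ) :
    Tendsto (fun n ↦ (⟪ξ, (cfc (negLogTrunc n) σ - cfc (negLogTrunc n) ρ) ξ⟫_ℂ).re) atTop
      (𝓝 (negLogForm σ ξ - negLogForm ρ ξ)) := by
  simpa only [negLogFormSeq, sub_apply, inner_sub_right, Complex.sub_re]
    using (hξσ.tendsto_negLogFormSeq hσ).sub (hξρ.tendsto_negLogFormSeq hρ)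

theorem statement1_general (hρ : 0 ≤ ρ) (hσ : 0 ≤ σ) (hC : 1 ≤ C) (hlow : C⁻¹ • ρ ≤ σ)
    (hupp : σ ≤ C • ρ) {q : E → ℝ}
    (hsum : ∀ ξ, InFormDomain σ ξ → negLogForm σ ξ = negLogForm ρ ξ + q ξ) :
    ∃ X : E →L[ℂ] E, IsSelfAdjoint X ∧
      (∀ ξ, InFormDomain ρ ξ → (⟪ξ, X ξ⟫_ℂ).re = q ξ) ∧
      (-Real.log C) • (1 : E →L[ℂ] E) ≤ X ∧ X ≤ Real.log C • (1 : E →L[ℂ] E) ∧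
      ‖X‖ ≤ Real.log C := by
  have hC₀ : 0 < C := one_pos.trans_le hC
  have hρσ : ρ ≤ C • σ := by
    simpa only [smul_inv_smul₀ hC₀.ne'] using smul_le_smul_of_nonneg_left hlow hC₀.le
  obtain ⟨X, ⟨hXlow, hXupp⟩, hX⟩ := (isCompact_preimage_toCLM_Icc _ _).exists_mapClusterPt
    (f := atTop) <| tendsto_principal.2 <| .of_forall <|
      cfc_negLogTrunc_sub_mem_Icc hρ hσ hC hρσ hupp
  have hnorm : ‖X.toCLM‖ ≤ Real.log C :=
    norm_le_of_mem_Icc_algebraMap (Real.log_nonneg hC) ⟨hXlow, hXupp⟩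
  have hsa : IsSelfAdjoint X.toCLM := ((IsSelfAdjoint.all _).algebraMap _).of_le hXupp
  rw [Algebra.algebraMap_eq_smul_one] at hXlow hXupp
  refine ⟨X.toCLM, hsa, fun ξ hξ ↦ ?_, neg_smul (Real.log C) (1 : E →L[ℂ] E) ▸ hXlow, hXupp, hnorm⟩
  have hξσ : InFormDomain σ ξ := hξ.of_le_smul hσ hρ hC hρσ
  calc (⟪ξ, X.toCLM ξ⟫_ℂ).re = negLogForm σ ξ - negLogForm ρ ξ :=
        re_inner_eq_of_mapClusterPt hX (hξ.tendsto_re_inner_cfc_negLogTrunc_sub hρ hσ hξσ)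
    _ = q ξ := by rw [hsum ξ hξσ, add_sub_cancel_left]

end QuadraticForm

/-- If `ρ = exp (-H₀)` and `σ = ρ_X = exp (-(H₀+X))` are finite faithful
weights and `σ` is nearby `ρ` with constant `C > 1` (`C⁻¹ ρ ≤ σ ≤ C ρ` in the Loewner
order), then the quadratic form `X` (with form domain `Dq`, the form sum relation
`-log σ = H₀ + X` being expressed by `hdom` and `hsum`) extends to a bounded
self-adjoint operator `Xop` on `H` with `-(log C) I ≤ Xop ≤ (log C) I`,
so in particular `‖Xop‖ ≤ log C`. -/
theorem statement1 {ι : Type*} (b : HilbertBasis ι ℂ H) (ρ σ : H →L[ℂ] H)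
    (hρ : IsFiniteWeight b ρ) (hσ : IsFiniteWeight b σ)
    (C : ℝ) (hC : 1 < C)
    (hlow : C⁻¹ • ρ ≤ σ) (hupp : σ ≤ C • ρ)
    (q : H → ℝ) (Dq : Set H)
    (hdom : ∀ ξ : H, InFormDomain σ ξ ↔ (InFormDomain ρ ξ ∧ ξ ∈ Dq))
    (hsum : ∀ ξ : H, InFormDomain σ ξ → negLogForm σ ξ = negLogForm ρ ξ + q ξ) :
    ∃ Xop : H →L[ℂ] H, IsSelfAdjoint Xop ∧
      (∀ ξ : H, InFormDomain ρ ξ → (⟪ξ, Xop ξ⟫_ℂ).re = q ξ) ∧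
      (-(Real.log C)) • (1 : H →L[ℂ] H) ≤ Xop ∧
      Xop ≤ (Real.log C) • (1 : H →L[ℂ] H) ∧
      ‖Xop‖ ≤ Real.log C :=
  statement1_general hρ.1 hσ.1 hC.le hlow hupp hsum
end
end

section
/- Let ρ = exp(−H₀) and ρ_X = exp(−(H₀+X)) be finite faithful weights on a separable Hilbert space H with X a bounded operator satisfying the Araki condition for ρ, and set M = ‖X‖_A = sup_{|t|<1/2} ‖ρ^t X ρ^{−t}‖. Then the Matsubara (Dyson/expansional) series for ρ^{−1/2} ρ_X ρ^{−1/2}, whose n-th term is (1/n!)∫ over the simplex {α₁+…+α_{n+1}=1, αᵢ ≥ 0} of (ρ^{α₁−1/2}Xρ^{1/2−α₁})(ρ^{α₁+α₂−1/2}Xρ^{1/2−α₁−α₂})⋯(ρ^{1/2−α_{n+1}}Xρ^{α_{n+1}−1/2}), converges in operator norm (each n-th term having norm at most M^n/n!), and its sum satisfies ρ^{−1/2} ρ_X ρ^{−1/2} ≤ e^M · I; consequently ρ_X ≤ e^M ρ in the Loewner order. -/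
open scoped InnerProductSpace ENNReal NNReal
open MeasureTheory Metric Filter

noncomputable section

variable {H : Type*} [NormedAddCommGroup H] [InnerProductSpace ℂ H] [CompleteSpace H]
  [TopologicalSpace.SeparableSpace H]

/-!
Let `W` be the Dyson series of the path `G s = ρ^{1/2-s} X ρ^{s-1/2}`, i.e. `W 0 = 1` and
`W' = -G * W`; the reflection `s ↦ 1 - s` identifies the Matsubara series with `W 1`. Formally
`W t = ρ^{1/2-t} σ^t ρ^{-1/2}`. As negative powers of `ρ` are unbounded, this is cleared of
denominators on each half of `[0, 1]` separately: `W t * ρ^{1/2} = ρ^{1/2-t} * σ^t` for `t ≤ 1/2`,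
and `ρ^{t-1/2} * W t * ρ^{1/2} = σ^t` for `t ≥ 1/2`. In both cases Duhamel's formula for `σ^t` and
the integral equation of `W` show that the difference of the two sides is a bounded solution of a
homogeneous Volterra equation, hence zero. At `t = 1` this reads `ρ^{1/2} * W 1 * ρ^{1/2} = σ`.
Since `ρ^{1/2}` is injective it can be cancelled, so `W 1` is self-adjoint because `σ` is, and then
`W 1 ≤ ‖W 1‖ ≤ e^M`; conjugation by `ρ^{1/2}` gives `σ ≤ e^M ρ`.
-/

open Set (Icc Ioi Ioo)
open scoped Nat

section Volterra

lemma integral_mul_pow_div_factorial (C a t : ℝ) (n : ℕ) :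
    ∫ s in a..t, C * ((C * (s - a)) ^ n / n !) = (C * (t - a)) ^ (n + 1) / (n + 1)! := by
  have hfun : (fun s : ℝ => C * ((C * (s - a)) ^ n / n !)) =
      fun s : ℝ => C ^ (n + 1) / n ! * (s - a) ^ n := by
    ext s; rw [mul_pow]; ring
  rw [hfun, intervalIntegral.integral_const_mul,
    intervalIntegral.integral_comp_sub_right (fun x => x ^ n), integral_pow,
    Nat.factorial_succ, mul_pow]
  push_cast
  field_simp
  ring

lemma eq_zero_of_eq_integral_of_norm_le {E : Type*} [NormedAddCommGroup E] [NormedSpace ℝ E]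
    {D : ℝ → E} {k : ℝ → ℝ → E} {a b B C : ℝ} (hC : 0 ≤ C)
    (hB : ∀ t ∈ Icc a b, ‖D t‖ ≤ B) (hD : ∀ t ∈ Icc a b, D t = ∫ s in a..t, k t s)
    (hk : ∀ t ∈ Icc a b, ∀ s ∈ Ioo a t, ‖k t s‖ ≤ C * ‖D s‖) {t : ℝ} (ht : t ∈ Icc a b) :
    D t = 0 := by
  have iterated_bound : ∀ n : ℕ, ∀ t ∈ Icc a b, ‖D t‖ ≤ B * ((C * (t - a)) ^ n / n !) := by
    intro n
    induction n with
    | zero => intro t ht; simpa using hB t ht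
    | succ n ih =>
      intro t ht
      calc ‖D t‖ = ‖∫ s in a..t, k t s‖ := by rw [← hD t ht]
        _ ≤ ∫ s in a..t, B * (C * ((C * (s - a)) ^ n / n !)) := by
          refine intervalIntegral.norm_integral_le_of_norm_le ht.1 ?_
            (Continuous.intervalIntegrable (by fun_prop) _ _)
          filter_upwards [Measure.ae_ne volume t] with s hst hs
          have hs' : s < t := lt_of_le_of_ne hs.2 hst
          calc ‖k t s‖ ≤ C * ‖D s‖ := hk t ht s ⟨hs.1, hs'⟩
            _ ≤ C * (B * ((C * (s - a)) ^ n / n !)) := by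
              gcongr; exact ih s ⟨hs.1.le, hs.2.trans ht.2⟩
            _ = B * (C * ((C * (s - a)) ^ n / n !)) := by ring
        _ = B * ((C * (t - a)) ^ (n + 1) / (n + 1)!) := by
          rw [intervalIntegral.integral_const_mul, integral_mul_pow_div_factorial]
  have bound_tendsto : Tendsto (fun n : ℕ => B * ((C * (t - a)) ^ n / n !)) atTop (nhds 0) := by
    simpa using (FloorSemiring.tendsto_pow_div_factorial_atTop (C * (t - a))).const_mul B
  exact norm_le_zero_iff.1 (ge_of_tendsto' bound_tendsto fun n => iterated_bound n t ht)

end Volterra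

section OrderedSimplex

/-- The simplex `{t ≥ s₀ ≥ s₁ ≥ ⋯ ≥ sₙ₋₁ ≥ 0}`. The coordinates decrease, so that removing the
first one from a point leaves a point of the simplex whose upper end it was. -/
def orderedSimplex (n : ℕ) (t : ℝ) : Set (Fin n → ℝ) :=
  {s | (∀ i, s i ∈ Icc 0 t) ∧ Antitone s}

lemma cons_mem_orderedSimplex {n : ℕ} {t x : ℝ} {s : Fin n → ℝ} :
    (Fin.cons x s : Fin (n + 1) → ℝ) ∈ orderedSimplex (n + 1) t ↔
      x ∈ Icc 0 t ∧ s ∈ orderedSimplex n x := by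
  constructor
  · rintro ⟨hmem, hanti⟩
    exact ⟨hmem 0, fun i => ⟨(hmem i.succ).1, hanti (Fin.zero_le i.succ)⟩,
      fun i j hij => hanti (Fin.succ_le_succ_iff.2 hij)⟩
  · rintro ⟨hx, hmem, hanti⟩
    refine ⟨Fin.cases hx fun i => ⟨(hmem i).1, (hmem i).2.trans hx.2⟩, fun i j hij => ?_⟩
    induction j using Fin.cases with
    | zero => rw [Fin.le_zero_iff.1 hij]
    | succ j =>
      induction i using Fin.cases with
      | zero => exact (hmem j).2
      | succ i => exact hanti (Fin.succ_le_succ_iff.1 hij)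

lemma isClosed_orderedSimplex (n : ℕ) (t : ℝ) : IsClosed (orderedSimplex n t) := by
  simp only [orderedSimplex, Antitone, Set.ofPred_and, Set.ofPred_forall]
  refine (isClosed_iInter fun i => isClosed_Icc.preimage (continuous_apply i)).inter ?_
  exact isClosed_iInter fun i => isClosed_iInter fun j => isClosed_iInter fun _ =>
    isClosed_le (continuous_apply j) (continuous_apply i)

lemma isCompact_orderedSimplex (n : ℕ) (t : ℝ) : IsCompact (orderedSimplex n t) :=
  (isCompact_univ_pi fun _ => isCompact_Icc).of_isClosed_subset (isClosed_orderedSimplex n t)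
    fun _ hs i _ => hs.1 i

lemma integral_fin_succ_eq_integral_integral_cons {E : Type*} [NormedAddCommGroup E]
    [NormedSpace ℝ E] {n : ℕ} {f : (Fin (n + 1) → ℝ) → E} (hf : Integrable f) :
    ∫ s, f s = ∫ x : ℝ, ∫ s : Fin n → ℝ, f (Fin.cons x s) := by
  have hmp := (volume_preserving_piFinSuccAbove (fun _ : Fin (n + 1) => ℝ) 0).symm
  have hemb := MeasurableEquiv.measurableEmbedding
    (MeasurableEquiv.piFinSuccAbove (fun _ : Fin (n + 1) => ℝ) 0).symm
  rw [← hmp.integral_comp hemb, Measure.volume_eq_prod, integral_prod]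
  · simp [MeasurableEquiv.piFinSuccAbove, Fin.insertNthEquiv]
  · exact (hmp.integrable_comp_emb hemb).2 hf

end OrderedSimplex

section Dyson

variable {A : Type*} [NormedRing A] {G : ℝ → A} {M : ℝ}

lemma norm_prod_ofFn_le {n : ℕ} {a : Fin n → A} (ha : ∀ i, ‖a i‖ ≤ M) :
    ‖(List.ofFn a).prod‖ ≤ ‖(1 : A)‖ * M ^ n := by
  induction n with
  | zero => simp
  | succ n ih =>
    rw [List.ofFn_succ, List.prod_cons]
    calc ‖a 0 * (List.ofFn fun i : Fin n => a i.succ).prod‖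
        ≤ ‖a 0‖ * ‖(List.ofFn fun i : Fin n => a i.succ).prod‖ := norm_mul_le _ _
      _ ≤ M * (‖(1 : A)‖ * M ^ n) :=
        mul_le_mul (ha 0) (ih fun i => ha i.succ) (norm_nonneg _) ((norm_nonneg _).trans (ha 0))
      _ = ‖(1 : A)‖ * M ^ (n + 1) := by ring

lemma aestronglyMeasurable_prod_ofFn (hG : AEStronglyMeasurable G) (n : ℕ) :
    AEStronglyMeasurable fun s : Fin n → ℝ => (List.ofFn fun i => G (s i)).prod := by
  have hprod := List.aestronglyMeasurable_fun_prod (μ := (volume : Measure (Fin n → ℝ)))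
    (List.ofFn fun (i : Fin n) (s : Fin n → ℝ) => G (s i)) fun f hf => by
      obtain ⟨i, rfl⟩ := List.mem_ofFn.1 hf
      exact hG.comp_quasiMeasurePreserving (Measure.quasiMeasurePreserving_eval (fun _ => volume) i)
  simpa only [List.map_ofFn, Function.comp_def] using hprod

lemma intervalIntegrable_mul_continuousOn {f : ℝ → A} {a b : ℝ} (hG : AEStronglyMeasurable G)
    (hM : ∀ s, ‖G s‖ ≤ M) (hf : ContinuousOn f (Set.uIcc a b)) :
    IntervalIntegrable (fun s => G s * f s) volume a b :=
  ((intervalIntegrable_const (c := M)).mono_fun hG.restrict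
    (Eventually.of_forall fun s => (hM s).trans (le_abs_self M))).mul_continuousOn hf

lemma integrableOn_prod_ofFn (hG : AEStronglyMeasurable G) (hM : ∀ s, ‖G s‖ ≤ M) (n : ℕ) (t : ℝ) :
    IntegrableOn (fun s : Fin n → ℝ => (List.ofFn fun i => G (s i)).prod) (orderedSimplex n t) :=
  Measure.integrableOn_of_bounded (isCompact_orderedSimplex n t).measure_lt_top.ne
    (aestronglyMeasurable_prod_ofFn hG n) (M := ‖(1 : A)‖ * M ^ n)
    (Eventually.of_forall fun _ => norm_prod_ofFn_le fun _ => hM _)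

variable [NormedAlgebra ℝ A]

/-- The `n`-th term of the Dyson series of the path `G` at time `t`, up to sign: the integral of
the products `G s₀ * G s₁ * ⋯ * G sₙ₋₁` over `t ≥ s₀ ≥ s₁ ≥ ⋯ ≥ sₙ₋₁ ≥ 0`. -/
def dysonTerm (G : ℝ → A) (n : ℕ) (t : ℝ) : A :=
  ∫ s in orderedSimplex n t, (List.ofFn fun i => G (s i)).prod

lemma dysonTerm_succ (hG : AEStronglyMeasurable G) (hM : ∀ s, ‖G s‖ ≤ M) (n : ℕ) {t : ℝ}
    (ht : 0 ≤ t) : dysonTerm G (n + 1) t = ∫ s in (0 : ℝ)..t, G s * dysonTerm G n s := by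
  have hmeas (m : ℕ) (u : ℝ) := (isClosed_orderedSimplex m u).measurableSet
  have indicator_cons (x : ℝ) (s : Fin n → ℝ) :
      (orderedSimplex (n + 1) t).indicator (fun s => (List.ofFn fun i => G (s i)).prod)
        (Fin.cons x s) =
      (Icc 0 t).indicator (fun x => (orderedSimplex n x).indicator
        (fun s => G x * (List.ofFn fun i => G (s i)).prod) s) x := by
    classical
    simp only [Set.indicator_apply, cons_mem_orderedSimplex, ite_and, List.ofFn_succ,
      List.prod_cons, Fin.cons_zero, Fin.cons_succ]
  rw [dysonTerm, ← integral_indicator (hmeas _ _), integral_fin_succ_eq_integral_integral_cons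
      ((integrable_indicator_iff (hmeas _ _)).2 (integrableOn_prod_ofFn hG hM (n + 1) t)),
    intervalIntegral.integral_of_le ht, ← integral_Icc_eq_integral_Ioc,
    ← integral_indicator measurableSet_Icc]
  refine integral_congr_ae (Eventually.of_forall fun x => ?_)
  simp only [indicator_cons]
  by_cases hx : x ∈ Icc 0 t
  · simp only [Set.indicator_of_mem hx]
    rw [integral_indicator (hmeas _ _)]
    exact integral_const_mul_of_integrable (integrableOn_prod_ofFn hG hM n x)
  · simp only [Set.indicator_of_notMem hx, integral_zero]

variable [CompleteSpace A]

lemma dysonTerm_zero (G : ℝ → A) (t : ℝ) : dysonTerm G 0 t = 1 := by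
  have huniv : orderedSimplex 0 t = Set.univ :=
    Set.eq_univ_of_forall fun s => ⟨fun i => i.elim0, fun i => i.elim0⟩
  simp [dysonTerm, huniv, Measure.volume_pi_eq_dirac 0]

lemma continuousOn_dysonTerm (hG : AEStronglyMeasurable G) (hM : ∀ s, ‖G s‖ ≤ M) (n : ℕ)
    (T : ℝ) : ContinuousOn (dysonTerm G n) (Icc 0 T) := by
  induction n with
  | zero => exact continuousOn_const.congr fun t _ => dysonTerm_zero G t
  | succ n ih =>
    rcases lt_or_ge T 0 with hT | hT
    · simp [Set.Icc_eq_empty hT.not_ge]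
    rw [← Set.uIcc_of_le hT] at ih ⊢
    refine (intervalIntegral.continuousOn_primitive_interval'
      (intervalIntegrable_mul_continuousOn hG hM ih) Set.left_mem_uIcc).congr fun t ht => ?_
    exact dysonTerm_succ hG hM n (Set.uIcc_of_le hT ▸ ht).1

lemma norm_dysonTerm_le (hG : AEStronglyMeasurable G) (hM : ∀ s, ‖G s‖ ≤ M) (n : ℕ) {t : ℝ}
    (ht : 0 ≤ t) : ‖dysonTerm G n t‖ ≤ ‖(1 : A)‖ * ((M * t) ^ n / n !) := by
  have hM0 : 0 ≤ M := (norm_nonneg _).trans (hM 0)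
  induction n generalizing t with
  | zero => simp [dysonTerm_zero]
  | succ n ih =>
    calc ‖dysonTerm G (n + 1) t‖ = ‖∫ s in (0 : ℝ)..t, G s * dysonTerm G n s‖ := by
          rw [dysonTerm_succ hG hM n ht]
      _ ≤ ∫ s in (0 : ℝ)..t, ‖(1 : A)‖ * (M * ((M * (s - 0)) ^ n / n !)) := by
        refine intervalIntegral.norm_integral_le_of_norm_le ht
          (Eventually.of_forall fun s hs => ?_) (Continuous.intervalIntegrable (by fun_prop) _ _)
        calc ‖G s * dysonTerm G n s‖ ≤ ‖G s‖ * ‖dysonTerm G n s‖ := norm_mul_le _ _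
          _ ≤ M * (‖(1 : A)‖ * ((M * s) ^ n / n !)) := by gcongr; exacts [hM s, ih hs.1.le]
          _ = ‖(1 : A)‖ * (M * ((M * (s - 0)) ^ n / n !)) := by rw [sub_zero]; ring
      _ = ‖(1 : A)‖ * ((M * t) ^ (n + 1) / (n + 1)!) := by
        rw [intervalIntegral.integral_const_mul, integral_mul_pow_div_factorial, sub_zero]

/-- The Dyson series of the path `G`, i.e. the solution of `W 0 = 1`, `W' = -G * W`. -/
def dysonSeries (G : ℝ → A) (t : ℝ) : A := ∑' n : ℕ, ((-1 : ℝ) ^ n) • dysonTerm G n t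

lemma norm_neg_one_pow_smul_dysonTerm_le (hG : AEStronglyMeasurable G) (hM : ∀ s, ‖G s‖ ≤ M)
    (n : ℕ) {s t : ℝ} (hs : 0 ≤ s) (hst : s ≤ t) :
    ‖((-1 : ℝ) ^ n) • dysonTerm G n s‖ ≤ ‖(1 : A)‖ * ((M * t) ^ n / n !) := by
  have hM0 : 0 ≤ M := (norm_nonneg _).trans (hM 0)
  calc ‖((-1 : ℝ) ^ n) • dysonTerm G n s‖ = ‖dysonTerm G n s‖ := by simp [norm_smul]
    _ ≤ ‖(1 : A)‖ * ((M * s) ^ n / n !) := norm_dysonTerm_le hG hM n hs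
    _ ≤ ‖(1 : A)‖ * ((M * t) ^ n / n !) := by gcongr

lemma hasSum_dysonSeries (hG : AEStronglyMeasurable G) (hM : ∀ s, ‖G s‖ ≤ M) {t : ℝ}
    (ht : 0 ≤ t) :
    HasSum (fun n : ℕ => ((-1 : ℝ) ^ n) • dysonTerm G n t) (dysonSeries G t) :=
  (Summable.of_norm_bounded ((Real.summable_pow_div_factorial (M * t)).mul_left ‖(1 : A)‖)
    fun n => norm_neg_one_pow_smul_dysonTerm_le hG hM n ht le_rfl).hasSum

lemma norm_dysonSeries_le (hG : AEStronglyMeasurable G) (hM : ∀ s, ‖G s‖ ≤ M) {t : ℝ}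
    (ht : 0 ≤ t) : ‖dysonSeries G t‖ ≤ ‖(1 : A)‖ * Real.exp (M * t) := by
  refine tsum_of_norm_bounded (HasSum.mul_left _ ?_)
    fun n => norm_neg_one_pow_smul_dysonTerm_le hG hM n ht le_rfl
  rw [Real.exp_eq_exp_ℝ]
  exact NormedSpace.expSeries_div_hasSum_exp (M * t)

lemma continuousOn_dysonSeries (hG : AEStronglyMeasurable G) (hM : ∀ s, ‖G s‖ ≤ M) (T : ℝ) :
    ContinuousOn (dysonSeries G) (Icc 0 T) :=
  continuousOn_tsum (fun n => (continuousOn_dysonTerm hG hM n T).const_smul _)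
    ((Real.summable_pow_div_factorial (M * T)).mul_left ‖(1 : A)‖)
    fun n _ hs => norm_neg_one_pow_smul_dysonTerm_le hG hM n hs.1 hs.2

lemma dysonSeries_eq_one_sub_integral (hG : AEStronglyMeasurable G) (hM : ∀ s, ‖G s‖ ≤ M) {t : ℝ}
    (ht : 0 ≤ t) : dysonSeries G t = 1 - ∫ s in (0 : ℝ)..t, G s * dysonSeries G s := by
  have hM0 : 0 ≤ M := (norm_nonneg _).trans (hM 0)
  have hasSum_integral :
      HasSum (fun n : ℕ => ∫ s in (0 : ℝ)..t, G s * (((-1 : ℝ) ^ n) • dysonTerm G n s))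
        (∫ s in (0 : ℝ)..t, G s * dysonSeries G s) := by
    refine intervalIntegral.hasSum_integral_of_dominated_convergence
      (fun n _ => M * (‖(1 : A)‖ * ((M * t) ^ n / n !))) (fun n => ?_)
      (fun n => Eventually.of_forall fun s hs => ?_) (Eventually.of_forall fun s _ => ?_)
      intervalIntegrable_const (Eventually.of_forall fun s hs => ?_)
    · refine (intervalIntegrable_mul_continuousOn hG hM ?_).def'.aestronglyMeasurable
      rw [Set.uIcc_of_le ht]
      exact (continuousOn_dysonTerm hG hM n t).const_smul _
    · rw [Set.uIoc_of_le ht] at hs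
      exact (norm_mul_le _ _).trans (mul_le_mul (hM s)
        (norm_neg_one_pow_smul_dysonTerm_le hG hM n hs.1.le hs.2) (norm_nonneg _) hM0)
    · exact ((Real.summable_pow_div_factorial (M * t)).mul_left _).mul_left M
    · rw [Set.uIoc_of_le ht] at hs
      exact (hasSum_dysonSeries hG hM hs.1.le).mul_left _
  have integral_term (n : ℕ) :
      ∫ s in (0 : ℝ)..t, G s * (((-1 : ℝ) ^ n) • dysonTerm G n s) =
        -(((-1 : ℝ) ^ (n + 1)) • dysonTerm G (n + 1) t) := by
    simp only [mul_smul_comm, intervalIntegral.integral_smul, dysonTerm_succ hG hM n ht, pow_succ,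
      mul_neg_one, neg_smul, neg_neg]
  simp_rw [integral_term] at hasSum_integral
  rw [dysonSeries, (hasSum_dysonSeries hG hM ht).summable.tsum_eq_zero_add,
    ← hasSum_integral.tsum_eq, tsum_neg, dysonTerm_zero, pow_zero, one_smul, sub_neg_eq_add]

end Dyson

section Semigroup

lemma intervalIntegrable_of_continuousOn_Ioo {E : Type*} [NormedAddCommGroup E] {f : ℝ → E}
    {a b C : ℝ} (hab : a ≤ b) (hf : ContinuousOn f (Ioo a b)) (hC : ∀ s ∈ Ioo a b, ‖f s‖ ≤ C) :
    IntervalIntegrable f volume a b := by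
  rw [intervalIntegrable_iff_integrableOn_Ioo_of_le hab]
  exact IntegrableOn.of_bound measure_Ioo_lt_top
    (hf.aestronglyMeasurable measurableSet_Ioo) C
    ((ae_restrict_iff' measurableSet_Ioo).2 (Eventually.of_forall hC))

variable {A : Type*} [NormedRing A]

/-- A one-parameter semigroup `P t`, `t ≥ 0`, that is locally bounded, and norm continuous for
`t > 0`. Continuity at `t = 0` is not required: it fails for the powers of a non-invertible
injective operator. -/
structure IsOperatorSemigroup (P : ℝ → A) : Prop where
  zero : P 0 = 1
  add : ∀ {s t : ℝ}, 0 ≤ s → 0 ≤ t → P (s + t) = P s * P t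
  continuousOn : ContinuousOn P (Ioi 0)
  bounded : ∀ T : ℝ, ∃ C, ∀ t ∈ Icc 0 T, ‖P t‖ ≤ C

variable {P Q G : ℝ → A} {X : A} {M c : ℝ}

lemma IsOperatorSemigroup.intervalIntegrable_mul_mul (hP : IsOperatorSemigroup P)
    (hQ : IsOperatorSemigroup Q) (X : A) {a b t : ℝ} (ha : 0 ≤ a) (hab : a ≤ b) (hbt : b ≤ t) :
    IntervalIntegrable (fun s => P (t - s) * X * Q s) volume a b := by
  obtain ⟨p, hp⟩ := hP.bounded t
  obtain ⟨q, hq⟩ := hQ.bounded t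
  have hp0 : 0 ≤ p := (norm_nonneg _).trans (hp 0 ⟨le_rfl, by linarith⟩)
  refine intervalIntegrable_of_continuousOn_Ioo (C := p * ‖X‖ * q) hab ?_ fun s hs => ?_
  · refine ContinuousOn.mul (ContinuousOn.mul ?_ continuousOn_const) ?_
    · exact hP.continuousOn.comp (by fun_prop) fun s hs => sub_pos.2 (hs.2.trans_le hbt)
    · exact hQ.continuousOn.mono fun s hs => ha.trans_lt hs.1
  · have hs0 : 0 ≤ s := ha.trans hs.1.le
    have hst : s ≤ t := hs.2.le.trans hbt
    refine norm_mul₃_le.trans ?_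
    gcongr
    · exact hp _ ⟨by linarith, by linarith⟩
    · exact hq _ ⟨hs0, hst⟩

variable [NormedAlgebra ℝ A]

/-- `Q` is the semigroup generated by `-(H₀ + X)`, where `P` is the one generated by `-H₀`: it is a
mild solution, in the sense of Duhamel's formula, of the perturbed evolution equation. -/
def IsMildPerturbation (P Q : ℝ → A) (X : A) : Prop :=
  ∀ t : ℝ, 0 ≤ t → Q t = P t - ∫ s in (0 : ℝ)..t, P (t - s) * X * Q s

variable [CompleteSpace A]

lemma mul_intervalIntegral {f : ℝ → A} {a b : ℝ} (x : A)
    (hf : IntervalIntegrable f volume a b) : x * (∫ s in a..b, f s) = ∫ s in a..b, x * f s :=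
  ((ContinuousLinearMap.mul ℝ A x).intervalIntegral_comp_comm hf).symm

lemma intervalIntegral_mul {f : ℝ → A} {a b : ℝ} (x : A)
    (hf : IntervalIntegrable f volume a b) : (∫ s in a..b, f s) * x = ∫ s in a..b, f s * x :=
  (((ContinuousLinearMap.mul ℝ A).flip x).intervalIntegral_comp_comm hf).symm

lemma intervalIntegrable_mul_dysonSeries (hG : AEStronglyMeasurable G) (hM : ∀ s, ‖G s‖ ≤ M)
    {a b : ℝ} (ha : 0 ≤ a) (hab : a ≤ b) :
    IntervalIntegrable (fun s => G s * dysonSeries G s) volume a b := by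
  refine intervalIntegrable_mul_continuousOn hG hM ((continuousOn_dysonSeries hG hM b).mono ?_)
  rw [Set.uIcc_of_le hab]
  exact Set.Icc_subset_Icc_left ha

lemma dysonSeries_eq_sub_integral (hG : AEStronglyMeasurable G) (hM : ∀ s, ‖G s‖ ≤ M) {t : ℝ}
    (hc : 0 ≤ c) (hct : c ≤ t) :
    dysonSeries G t = dysonSeries G c - ∫ s in c..t, G s * dysonSeries G s := by
  rw [dysonSeries_eq_one_sub_integral hG hM (hc.trans hct),
    dysonSeries_eq_one_sub_integral hG hM hc, ← intervalIntegral.integral_add_adjacent_intervals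
      (intervalIntegrable_mul_dysonSeries hG hM le_rfl hc)
      (intervalIntegrable_mul_dysonSeries hG hM hc hct)]
  abel

lemma IsMildPerturbation.mul_eq (h : IsMildPerturbation P Q X) (hP : IsOperatorSemigroup P)
    (hQ : IsOperatorSemigroup Q) {t : ℝ} (ht : 0 ≤ t) (htc : t ≤ c) :
    P (c - t) * Q t = P c - ∫ s in (0 : ℝ)..t, P (c - s) * X * Q s := by
  rw [h t ht, mul_sub, ← hP.add (by linarith) ht, sub_add_cancel,
    mul_intervalIntegral _ (hP.intervalIntegrable_mul_mul hQ X le_rfl ht le_rfl)]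
  congr 1
  refine intervalIntegral.integral_congr fun s hs => ?_
  rw [Set.uIcc_of_le ht] at hs
  simp only [← mul_assoc]
  rw [← hP.add (by linarith) (by linarith [hs.2]), sub_add_sub_cancel]

lemma IsMildPerturbation.eq_mul_sub (h : IsMildPerturbation P Q X) (hP : IsOperatorSemigroup P)
    (hQ : IsOperatorSemigroup Q) {t : ℝ} (hc : 0 ≤ c) (hct : c ≤ t) :
    Q t = P (t - c) * Q c - ∫ s in c..t, P (t - s) * X * Q s := by
  rw [h.mul_eq hP hQ hc hct, h t (hc.trans hct),
    ← intervalIntegral.integral_add_adjacent_intervals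
      (hP.intervalIntegrable_mul_mul hQ X le_rfl hc hct)
      (hP.intervalIntegrable_mul_mul hQ X hc hct le_rfl)]
  abel

lemma IsMildPerturbation.dysonSeries_mul_sub_eq_integral (h : IsMildPerturbation P Q X)
    (hP : IsOperatorSemigroup P) (hQ : IsOperatorSemigroup Q) (hG : AEStronglyMeasurable G)
    (hM : ∀ s, ‖G s‖ ≤ M) (hGP : ∀ s ∈ Ioo 0 c, G s * P (c - s) = P (c - s) * X) {t : ℝ}
    (ht : t ∈ Icc 0 c) :
    dysonSeries G t * P c - P (c - t) * Q t =
      ∫ s in (0 : ℝ)..t, -(G s * (dysonSeries G s * P c - P (c - s) * Q s)) := by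
  have hGW := intervalIntegrable_mul_dysonSeries hG hM le_rfl ht.1
  have hPQ := hP.intervalIntegrable_mul_mul hQ X le_rfl ht.1 ht.2
  rw [dysonSeries_eq_one_sub_integral hG hM ht.1, h.mul_eq hP hQ ht.1 ht.2, sub_mul, one_mul,
    sub_sub_sub_cancel_left, intervalIntegral_mul _ hGW,
    ← intervalIntegral.integral_sub hPQ (hGW.mul_const (P c))]
  refine intervalIntegral.integral_congr_uIoo fun s hs => ?_
  rw [Set.uIoo_of_le ht.1] at hs
  simp only [← hGP s ⟨hs.1, hs.2.trans_le ht.2⟩]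
  noncomm_ring

lemma IsMildPerturbation.dysonSeries_mul (h : IsMildPerturbation P Q X)
    (hP : IsOperatorSemigroup P) (hQ : IsOperatorSemigroup Q) (hG : AEStronglyMeasurable G)
    (hM : ∀ s, ‖G s‖ ≤ M) (hGP : ∀ s ∈ Ioo 0 c, G s * P (c - s) = P (c - s) * X) {t : ℝ}
    (ht : t ∈ Icc 0 c) : dysonSeries G t * P c = P (c - t) * Q t := by
  obtain ⟨p, hp⟩ := hP.bounded c
  obtain ⟨q, hq⟩ := hQ.bounded c
  obtain ⟨w, hw⟩ := isCompact_Icc.exists_bound_of_continuousOn (continuousOn_dysonSeries hG hM c)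
  have difference_bounded (s) (hs : s ∈ Icc 0 c) :
      ‖dysonSeries G s * P c - P (c - s) * Q s‖ ≤ w * p + p * q := by
    have hcs : c - s ∈ Icc 0 c := ⟨sub_nonneg.2 hs.2, sub_le_self c hs.1⟩
    have hc : c ∈ Icc 0 c := ⟨hs.1.trans hs.2, le_rfl⟩
    exact norm_sub_le_of_le (norm_mul_le_of_le (hw s hs) (hp c hc))
      (norm_mul_le_of_le (hp _ hcs) (hq s hs))
  refine sub_eq_zero.1 (eq_zero_of_eq_integral_of_norm_le ((norm_nonneg _).trans (hM 0))
    difference_bounded (fun r hr => h.dysonSeries_mul_sub_eq_integral hP hQ hG hM hGP hr)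
    (fun _ _ s _ => ?_) ht)
  rw [norm_neg]
  exact norm_mul_le_of_le (hM s) le_rfl

lemma IsMildPerturbation.mul_dysonSeries_mul_sub_eq_integral (h : IsMildPerturbation P Q X)
    (hP : IsOperatorSemigroup P) (hQ : IsOperatorSemigroup Q) (hG : AEStronglyMeasurable G)
    (hM : ∀ s, ‖G s‖ ≤ M) (hc : 0 ≤ c) {t : ℝ} (hct : c ≤ t)
    (hPG : ∀ s ∈ Ioo c t, P (s - c) * G s = X * P (s - c)) (hWc : dysonSeries G c * P c = Q c) :
    P (t - c) * dysonSeries G t * P c - Q t =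
      ∫ s in c..t, -(P (t - s) * X * (P (s - c) * dysonSeries G s * P c - Q s)) := by
  have hGW := intervalIntegrable_mul_dysonSeries hG hM hc hct
  have hPQ := hP.intervalIntegrable_mul_mul hQ X hc hct le_rfl
  rw [dysonSeries_eq_sub_integral hG hM hc hct, h.eq_mul_sub hP hQ hc hct, mul_sub, sub_mul,
    mul_assoc, hWc, sub_sub_sub_cancel_left, mul_intervalIntegral _ hGW,
    intervalIntegral_mul _ (hGW.const_mul (P (t - c))),
    ← intervalIntegral.integral_sub hPQ ((hGW.const_mul (P (t - c))).mul_const (P c))]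
  refine intervalIntegral.integral_congr_uIoo fun s hs => ?_
  rw [Set.uIoo_of_le hct] at hs
  have intertwine : P (t - c) * G s = P (t - s) * X * P (s - c) := by
    rw [← sub_add_sub_cancel t s c, hP.add (sub_nonneg.2 hs.2.le) (sub_nonneg.2 hs.1.le),
      mul_assoc, hPG s hs, mul_assoc]
  simp only [← mul_assoc, intertwine]
  noncomm_ring

lemma IsMildPerturbation.mul_dysonSeries_mul (h : IsMildPerturbation P Q X)
    (hP : IsOperatorSemigroup P) (hQ : IsOperatorSemigroup Q) (hG : AEStronglyMeasurable G)
    (hM : ∀ s, ‖G s‖ ≤ M) (hc : 0 ≤ c) {t : ℝ} (hct : c ≤ t)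
    (hGP : ∀ s ∈ Ioo 0 c, G s * P (c - s) = P (c - s) * X)
    (hPG : ∀ s ∈ Ioo c t, P (s - c) * G s = X * P (s - c)) :
    P (t - c) * dysonSeries G t * P c = Q t := by
  obtain ⟨p, hp⟩ := hP.bounded t
  obtain ⟨q, hq⟩ := hQ.bounded t
  obtain ⟨w, hw⟩ := isCompact_Icc.exists_bound_of_continuousOn (continuousOn_dysonSeries hG hM t)
  have hp0 : 0 ≤ p := (norm_nonneg _).trans (hp c ⟨hc, hct⟩)
  have hWc : dysonSeries G c * P c = Q c := by
    simpa only [sub_self, hP.zero, one_mul] using h.dysonSeries_mul hP hQ hG hM hGP ⟨hc, le_rfl⟩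
  have difference_bounded (s) (hs : s ∈ Icc c t) :
      ‖P (s - c) * dysonSeries G s * P c - Q s‖ ≤ p * w * p + q := by
    have hs0 : s ∈ Icc 0 t := ⟨hc.trans hs.1, hs.2⟩
    have hsc : s - c ∈ Icc 0 t := ⟨sub_nonneg.2 hs.1, (sub_le_self s hc).trans hs.2⟩
    exact norm_sub_le_of_le (norm_mul_le_of_le (norm_mul_le_of_le (hp _ hsc) (hw s hs0))
      (hp c ⟨hc, hct⟩)) (hq s hs0)
  refine sub_eq_zero.1 (eq_zero_of_eq_integral_of_norm_le (C := p * ‖X‖) (by positivity)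
    difference_bounded (fun r hr => h.mul_dysonSeries_mul_sub_eq_integral hP hQ hG hM hc hr.1
      (fun s hs => hPG s ⟨hs.1, hs.2.trans_le hr.2⟩) hWc) (fun r hr s hs => ?_) ⟨hct, le_rfl⟩)
  have hrs : r - s ∈ Icc 0 t := ⟨sub_nonneg.2 hs.2.le, by linarith [hs.1, hr.2]⟩
  rw [norm_neg]
  exact norm_mul_le_of_le (norm_mul_le_of_le (hp _ hrs) le_rfl) le_rfl

end Semigroup

section OperatorPowers

variable {K : Type*} [NormedAddCommGroup K] [InnerProductSpace ℂ K] [CompleteSpace K]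
  {ρ σ X : K →L[ℂ] K}

lemma isSelfAdjoint_opow (ρ : K →L[ℂ] K) (t : ℝ) : IsSelfAdjoint (opow ρ t) :=
  cfc_predicate _ ρ

lemma opow_zero (hρ : 0 ≤ ρ) : opow ρ 0 = 1 := by
  have : IsSelfAdjoint ρ := .of_nonneg hρ
  simpa only [opow, Real.rpow_zero] using cfc_const_one ℝ ρ

lemma opow_one (hρ : 0 ≤ ρ) : opow ρ 1 = ρ := by
  have : IsSelfAdjoint ρ := .of_nonneg hρ
  simpa only [opow, Real.rpow_one] using cfc_id' ℝ ρ

lemma opow_add (hρ : 0 ≤ ρ) {s t : ℝ} (hs : 0 ≤ s) (ht : 0 ≤ t) :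
    opow ρ (s + t) = opow ρ s * opow ρ t := by
  rw [opow, opow, opow, ← cfc_mul _ _ ρ (Real.continuous_rpow_const hs).continuousOn
    (Real.continuous_rpow_const ht).continuousOn]
  exact cfc_congr fun x hx => Real.rpow_add_of_nonneg (spectrum_nonneg_of_nonneg hρ hx) hs ht

lemma norm_opow_le (hρ : 0 ≤ ρ) {t : ℝ} (ht : 0 ≤ t) : ‖opow ρ t‖ ≤ ‖ρ‖ ^ t := by
  refine norm_cfc_le (by positivity) fun x hx => ?_
  have hx0 : 0 ≤ x := spectrum_nonneg_of_nonneg hρ hx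
  have hxρ : x ≤ ‖ρ‖ :=
    calc x ≤ ‖ρ‖ * ‖(1 : K →L[ℂ] K)‖ :=
          (Real.le_norm_self x).trans (spectrum.norm_le_norm_mul_of_mem hx)
      _ ≤ ‖ρ‖ := mul_le_of_le_one_right (norm_nonneg ρ) ContinuousLinearMap.norm_id_le
  rw [Real.norm_of_nonneg (Real.rpow_nonneg hx0 t)]
  exact Real.rpow_le_rpow hx0 hxρ ht

lemma continuousOn_opow (ρ : K →L[ℂ] K) : ContinuousOn (opow ρ) (Ioi 0) := by
  intro t (ht : 0 < t)
  refine (continuousAt_cfc_fun (f := fun t x => x ^ t) (a := ρ) ?_ ?_).continuousWithinAt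
  · have hU : Icc (t / 2) (t + 1) ∈ nhds t := Icc_mem_nhds (by linarith) (by linarith)
    rw [← nhdsWithin_eq_nhds.2 hU]
    refine UniformContinuousOn.tendstoUniformlyOn
      ((isCompact_Icc.prod (spectrum.isCompact ρ)).uniformContinuousOn_of_continuous ?_)
      (mem_of_mem_nhds hU)
    rintro ⟨s, x⟩ ⟨hs, -⟩
    have hs0 : 0 < s := (half_pos ht).trans_le hs.1
    exact (continuousAt_snd.rpow continuousAt_fst (Or.inr hs0)).continuousWithinAt
  · filter_upwards [Ioi_mem_nhds ht] with s hs
    exact (Real.continuous_rpow_const (le_of_lt hs)).continuousOn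

lemma isOperatorSemigroup_opow (hρ : 0 ≤ ρ) : IsOperatorSemigroup (opow ρ) where
  zero := opow_zero hρ
  add := opow_add hρ
  continuousOn := continuousOn_opow ρ
  bounded T := by
    refine ⟨(1 + ‖ρ‖) ^ T, fun t ht => (norm_opow_le hρ ht.1).trans ?_⟩
    calc ‖ρ‖ ^ t ≤ (1 + ‖ρ‖) ^ t := by gcongr; exacts [ht.1, by linarith]
      _ ≤ (1 + ‖ρ‖) ^ T := by gcongr; exacts [by linarith [norm_nonneg ρ], ht.2]

lemma opow_half_mul_self (hρ : 0 ≤ ρ) : opow ρ (1 / 2) * opow ρ (1 / 2) = ρ := by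
  rw [← opow_add hρ (by norm_num) (by norm_num), add_halves, opow_one hρ]

lemma isLeftRegular_opow_half (hρ : 0 ≤ ρ) (hinj : Function.Injective ρ) :
    IsLeftRegular (opow ρ (1 / 2)) := by
  have hρ_reg : IsLeftRegular ρ := fun S T hST => ContinuousLinearMap.cancel_left hinj hST
  rw [← opow_half_mul_self hρ] at hρ_reg
  exact hρ_reg.of_mul

end OperatorPowers

section Order

lemma isSelfAdjoint_of_isSelfAdjoint_conjugate {R : Type*} [Semigroup R] [StarMul R] {r s : R}
    (hr : IsSelfAdjoint r) (hreg : IsLeftRegular r) (h : IsSelfAdjoint (r * s * r)) :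
    IsSelfAdjoint s := by
  have hreg' : IsRightRegular r := by simpa only [hr.star_eq] using hreg.star
  have hstar : r * star s * r = r * s * r := by
    simpa only [star_mul, hr.star_eq, mul_assoc] using h.star_eq
  exact hreg (hreg' hstar)

lemma le_smul_one_of_norm_le {A : Type*} [CStarAlgebra A] [PartialOrder A] [StarOrderedRing A]
    {a : A} (ha : IsSelfAdjoint a) {C : ℝ} (hC : ‖a‖ ≤ C) : a ≤ C • (1 : A) :=
  calc a ≤ algebraMap ℝ A ‖a‖ := ha.le_algebraMap_norm_self
    _ = ‖a‖ • (1 : A) := Algebra.algebraMap_eq_smul_one _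
    _ ≤ C • (1 : A) := smul_le_smul_of_nonneg_right hC zero_le_one

end Order

section Araki

variable {K : Type*} [NormedAddCommGroup K] [InnerProductSpace ℂ K] {F : ℂ → K →L[ℂ] K} {M : ℝ}

/-- The path `s ↦ ρ^{1/2-s} X ρ^{s-1/2}` that drives the Matsubara series, for the Araki family
`F t = ρ^t X ρ^{-t}`. It is cut off outside `(0, 1)`, where `1/2 - s` leaves the open disc on
which `F` is controlled. -/
def arakiPath (F : ℂ → K →L[ℂ] K) : ℝ → K →L[ℂ] K :=
  (Ioo (0 : ℝ) 1).indicator fun s => F ((1 / 2 - s : ℝ) : ℂ)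

lemma half_sub_mem_ball {s : ℝ} (hs : s ∈ Ioo (0 : ℝ) 1) :
    ((1 / 2 - s : ℝ) : ℂ) ∈ ball (0 : ℂ) (1 / 2) := by
  rw [mem_ball_zero_iff, Complex.norm_real, Real.norm_eq_abs, abs_lt]
  constructor <;> linarith [hs.1, hs.2]

lemma norm_arakiPath_le (hM : ∀ t ∈ ball (0 : ℂ) (1 / 2), ‖F t‖ ≤ M) (s : ℝ) :
    ‖arakiPath F s‖ ≤ M := by
  rw [arakiPath, norm_indicator_eq_indicator_norm]
  exact Set.indicator_apply_le' (fun hs => hM _ (half_sub_mem_ball hs))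
    fun _ => (norm_nonneg _).trans (hM 0 (by simp))

lemma aestronglyMeasurable_arakiPath (hF : ContinuousOn F (ball (0 : ℂ) (1 / 2))) :
    AEStronglyMeasurable (arakiPath F) := by
  rw [arakiPath, aestronglyMeasurable_indicator_iff measurableSet_Ioo]
  exact (hF.comp (f := fun s : ℝ => ((1 / 2 - s : ℝ) : ℂ)) (by fun_prop)
    fun s hs => half_sub_mem_ball hs).aestronglyMeasurable measurableSet_Ioo

lemma matsubaraTerm_eq_dysonTerm (F : ℂ → K →L[ℂ] K) (n : ℕ) :
    matsubaraTerm F n = dysonTerm (arakiPath F) n 1 := by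
  have reflect_preimage : (fun s : Fin n → ℝ => 1 - s) ⁻¹'
      {s | (∀ i, s i ∈ Icc (0 : ℝ) 1) ∧ Monotone s} = orderedSimplex n 1 := by
    ext s
    simp only [Set.mem_preimage, Set.mem_ofPred_eq, orderedSimplex, Pi.sub_apply, Pi.one_apply,
      Set.sub_mem_Icc_iff_right, Monotone, Antitone, sub_le_sub_iff_left, sub_self, sub_zero]
  rw [matsubaraTerm, ← (Measure.measurePreserving_sub_left volume 1).setIntegral_preimage_emb
    (MeasurableEquiv.subLeft 1).measurableEmbedding, reflect_preimage, dysonTerm]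
  refine setIntegral_congr_ae (isClosed_orderedSimplex n 1).measurableSet ?_
  have ae_interior : ∀ᵐ s : Fin n → ℝ, ∀ i, s i ≠ 0 ∧ s i ≠ 1 :=
    ae_all_iff.2 fun i => (Measure.ae_eval_ne (fun _ => volume) i 0).and
      (Measure.ae_eval_ne (fun _ => volume) i 1)
  filter_upwards [ae_interior] with s hs hmem
  have hs01 (i : Fin n) : s i ∈ Ioo (0 : ℝ) 1 :=
    ⟨(hmem.1 i).1.lt_of_ne' (hs i).1, (hmem.1 i).2.lt_of_ne (hs i).2⟩
  congr 2
  funext i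
  rw [arakiPath, Set.indicator_of_mem (hs01 i), Pi.sub_apply, Pi.one_apply]
  congr 2
  ring

lemma tsum_matsubaraTerm_eq_dysonSeries (F : ℂ → K →L[ℂ] K) :
    ∑' n : ℕ, ((-1 : ℝ) ^ n) • matsubaraTerm F n = dysonSeries (arakiPath F) 1 := by
  simp only [matsubaraTerm_eq_dysonTerm, dysonSeries]

variable [CompleteSpace K] {ρ σ X : K →L[ℂ] K}

lemma norm_matsubaraTerm_le (hF : ContinuousOn F (ball (0 : ℂ) (1 / 2)))
    (hM : ∀ t ∈ ball (0 : ℂ) (1 / 2), ‖F t‖ ≤ M) (n : ℕ) : ‖matsubaraTerm F n‖ ≤ M ^ n / n ! := by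
  have hM0 : 0 ≤ M := (norm_nonneg _).trans (norm_arakiPath_le hM 0)
  calc ‖matsubaraTerm F n‖ = ‖dysonTerm (arakiPath F) n 1‖ := by rw [matsubaraTerm_eq_dysonTerm]
    _ ≤ ‖(1 : K →L[ℂ] K)‖ * ((M * 1) ^ n / n !) :=
      norm_dysonTerm_le (aestronglyMeasurable_arakiPath hF) (norm_arakiPath_le hM) n zero_le_one
    _ ≤ (M * 1) ^ n / n ! := mul_le_of_le_one_left (by positivity) ContinuousLinearMap.norm_id_le
    _ = M ^ n / n ! := by rw [mul_one]

lemma norm_tsum_matsubaraTerm_le (hF : ContinuousOn F (ball (0 : ℂ) (1 / 2)))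
    (hM : ∀ t ∈ ball (0 : ℂ) (1 / 2), ‖F t‖ ≤ M) :
    ‖∑' n : ℕ, ((-1 : ℝ) ^ n) • matsubaraTerm F n‖ ≤ Real.exp M :=
  calc ‖∑' n : ℕ, ((-1 : ℝ) ^ n) • matsubaraTerm F n‖ = ‖dysonSeries (arakiPath F) 1‖ := by
        rw [tsum_matsubaraTerm_eq_dysonSeries]
    _ ≤ ‖(1 : K →L[ℂ] K)‖ * Real.exp (M * 1) :=
      norm_dysonSeries_le (aestronglyMeasurable_arakiPath hF) (norm_arakiPath_le hM) zero_le_one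
    _ ≤ Real.exp (M * 1) :=
      mul_le_of_le_one_left (Real.exp_nonneg _) ContinuousLinearMap.norm_id_le
    _ = Real.exp M := by rw [mul_one]

lemma IsArakiFamily.arakiPath_mul_opow (hF : IsArakiFamily ρ X F) {s : ℝ}
    (hs : s ∈ Ioo (0 : ℝ) (1 / 2)) :
    arakiPath F s * opow ρ (1 / 2 - s) = opow ρ (1 / 2 - s) * X := by
  rw [arakiPath, Set.indicator_of_mem (show s ∈ Ioo 0 1 from ⟨hs.1, by linarith [hs.2]⟩)]
  exact hF.2.2.1 _ (by linarith [hs.2]) (by linarith [hs.1])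

lemma IsArakiFamily.opow_mul_arakiPath (hF : IsArakiFamily ρ X F) {s : ℝ}
    (hs : s ∈ Ioo (1 / 2 : ℝ) 1) :
    opow ρ (s - 1 / 2) * arakiPath F s = X * opow ρ (s - 1 / 2) := by
  rw [arakiPath, Set.indicator_of_mem (show s ∈ Ioo 0 1 from ⟨by linarith [hs.1], hs.2⟩),
    ← neg_sub s, Complex.ofReal_neg]
  exact hF.2.2.2 _ (by linarith [hs.1]) (by linarith [hs.2])

lemma IsArakiFamily.opow_mul_tsum_matsubaraTerm_mul_opow (hF : IsArakiFamily ρ X F) (hρ : 0 ≤ ρ)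
    (hσ : 0 ≤ σ) (hM : ∀ t ∈ ball (0 : ℂ) (1 / 2), ‖F t‖ ≤ M) (hσX : IsExpPerturbed ρ σ X) :
    opow ρ (1 / 2) * (∑' n : ℕ, ((-1 : ℝ) ^ n) • matsubaraTerm F n) * opow ρ (1 / 2) = σ := by
  have perturbed : IsMildPerturbation (opow ρ) (opow σ) X := hσX
  have splitting := perturbed.mul_dysonSeries_mul (c := 1 / 2) (t := 1)
    (isOperatorSemigroup_opow hρ) (isOperatorSemigroup_opow hσ)
    (aestronglyMeasurable_arakiPath hF.1.continuousOn) (norm_arakiPath_le hM) (by norm_num)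
    (by norm_num) (fun s hs => hF.arakiPath_mul_opow hs) fun s hs => hF.opow_mul_arakiPath hs
  rwa [sub_half, opow_one hσ, ← tsum_matsubaraTerm_eq_dysonSeries] at splitting

end Araki

theorem statement4_general {K : Type*} [NormedAddCommGroup K] [InnerProductSpace ℂ K]
    [CompleteSpace K] {ρ σ X : K →L[ℂ] K} (hρ : 0 ≤ ρ) (hρ_inj : Function.Injective ρ)
    (hσ : 0 ≤ σ) {F : ℂ → K →L[ℂ] K} (hF : IsArakiFamily ρ X F) {M : ℝ}
    (hM : ∀ t ∈ ball (0 : ℂ) (1 / 2), ‖F t‖ ≤ M) (hσX : IsExpPerturbed ρ σ X) :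
    (∀ n : ℕ, ‖matsubaraTerm F n‖ ≤ M ^ n / (n.factorial : ℝ)) ∧
    Summable (matsubaraTerm F) ∧
    opow ρ (1 / 2) * (∑' n : ℕ, ((-1 : ℝ) ^ n) • matsubaraTerm F n) * opow ρ (1 / 2) = σ ∧
    (∑' n : ℕ, ((-1 : ℝ) ^ n) • matsubaraTerm F n) ≤ Real.exp M • (1 : K →L[ℂ] K) ∧
    σ ≤ Real.exp M • ρ := by
  have norm_term_le := norm_matsubaraTerm_le hF.1.continuousOn hM
  have conjugate_eq := hF.opow_mul_tsum_matsubaraTerm_mul_opow hρ hσ hM hσX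
  have hR := isSelfAdjoint_opow ρ (1 / 2)
  have sum_selfAdjoint : IsSelfAdjoint (∑' n : ℕ, ((-1 : ℝ) ^ n) • matsubaraTerm F n) :=
    isSelfAdjoint_of_isSelfAdjoint_conjugate hR (isLeftRegular_opow_half hρ hρ_inj)
      (conjugate_eq ▸ .of_nonneg hσ)
  have sum_le := le_smul_one_of_norm_le sum_selfAdjoint
    (norm_tsum_matsubaraTerm_le hF.1.continuousOn hM)
  have σ_le : σ ≤ Real.exp M • ρ := by
    simpa only [conjugate_eq, mul_smul_comm, smul_mul_assoc, mul_one, opow_half_mul_self hρ]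
      using hR.conjugate_le_conjugate sum_le
  exact ⟨norm_term_le, .of_norm_bounded (Real.summable_pow_div_factorial M) norm_term_le,
    conjugate_eq, sum_le, σ_le⟩

/-- Let `ρ = exp (-H₀)` and `σ = ρ_X = exp (-(H₀+X))` be finite faithful
weights, with `X` bounded self-adjoint satisfying the Araki condition for `ρ` (with Araki
family `F` and `M = ‖X‖_A` bounding `‖F t‖` on the disc).  Then each term of the Matsubara
(Dyson/expansional) series for `ρ^{-1/2} ρ_X ρ^{-1/2}` has norm at most `M^n / n!`, the
series converges in operator norm, its sum equals `ρ^{-1/2} ρ_X ρ^{-1/2}` (expressed by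
multiplying through by `ρ^{1/2}`), the sum is `≤ e^M · I`, and consequently
`ρ_X ≤ e^M ρ` in the Loewner order. -/
theorem statement4 {ι : Type*} (b : HilbertBasis ι ℂ H) (ρ σ X : H →L[ℂ] H)
    (hρ : IsFiniteWeight b ρ) (hσ : IsFiniteWeight b σ) (hX : IsSelfAdjoint X)
    (F : ℂ → H →L[ℂ] H) (hF : IsArakiFamily ρ X F)
    (M : ℝ) (hM : ∀ t ∈ ball (0:ℂ) (1/2), ‖F t‖ ≤ M)
    (hσX : IsExpPerturbed ρ σ X) :
    (∀ n : ℕ, ‖matsubaraTerm F n‖ ≤ M ^ n / (n.factorial : ℝ)) ∧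
    Summable (matsubaraTerm F) ∧
    opow ρ (1/2) * (∑' n : ℕ, ((-1:ℝ) ^ n) • matsubaraTerm F n) * opow ρ (1/2) = σ ∧
    (∑' n : ℕ, ((-1:ℝ) ^ n) • matsubaraTerm F n) ≤ Real.exp M • (1 : H →L[ℂ] H) ∧
    σ ≤ Real.exp M • ρ :=
  statement4_general hρ.1 hρ.2.1 hσ.1 hF hM hσX
end
end
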